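/- arXiv:1803.07992 — 2 statements merged into one kernel-verified Lean document; each statement's English description precedes it below -/
import Mathlib

section
/- Let w₀, w₁, w₂, d be positive integers with w₀, w₁, w₂ pairwise coprime. Let v₁, v₂, v₃ ∈ ℤ³₍≥0₎ be lattice points each satisfying w₀·x + w₁·y + w₂·z = d, and suppose |det(v₁, v₂, v₃)| = d. Then every lattice point v ∈ ℤ³₍≥0₎ satisfying w₀·x + w₁·y + w₂·z = d can be written as v = α₁v₁ + α₂v₂ + α₃v₃ with α₁, α₂, α₃ ∈ ℤ. -/
/-!
For a unimodular integer vector `w` and `d > 0`, the lattice of all `x` with `d ∣ x ⬝ᵥ w` has index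
`d`, so members of it with determinant `± d` form a basis. Concretely, when `d` divides all entries
of `M *ᵥ w`, the identity `det M • w = adjugate M *ᵥ (M *ᵥ w)` and unimodularity give `d ∣ det M`.
By Cramer's rule the coefficients of `x` with respect to the rows of `M` are the quotients
`det (M.updateRow i x) / det M`, and these are integral because `det M ∣ d`.
-/

section

open Matrix

variable {n R : Type*} [Fintype n] [DecidableEq n] [CommRing R]

lemma dvd_det_mul_of_forall_dvd_mulVec {M : Matrix n n R} {w : n → R} {d : R}
    (h : ∀ i, d ∣ (M *ᵥ w) i) (j : n) : d ∣ M.det * w j := by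
  have hadj : M.det • w = M.adjugate *ᵥ (M *ᵥ w) := by
    rw [mulVec_mulVec, adjugate_mul, smul_mulVec, one_mulVec]
  rw [← smul_eq_mul, ← Pi.smul_apply, hadj]
  exact Finset.dvd_sum fun i _ ↦ (h i).mul_left _

lemma dvd_det_of_forall_dvd_mulVec {M : Matrix n n R} {w : n → R} {d : R}
    (hw : Ideal.span (Set.range w) = ⊤) (h : ∀ i, d ∣ (M *ᵥ w) i) : d ∣ M.det := by
  obtain ⟨u, hu⟩ := Ideal.mem_span_range_iff_exists_fun.mp ((Ideal.eq_top_iff_one _).mp hw)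
  rw [← mul_one M.det, ← hu, Finset.mul_sum]
  refine Finset.dvd_sum fun j _ ↦ ?_
  rw [mul_left_comm]
  exact (dvd_det_mul_of_forall_dvd_mulVec h j).mul_left _

lemma sum_det_updateRow_smul_row (M : Matrix n n R) (x : n → R) :
    ∑ i, (M.updateRow i x).det • M.row i = M.det • x := by
  rw [← det_transpose M, ← mulVec_cramer, mulVec_transpose, vecMul_eq_sum]
  simp only [cramer_transpose_apply, row_def]

lemma mem_span_range_row_of_det_dvd_det_updateRow {M : Matrix n n R} (hM : IsLeftRegular M.det)
    {x : n → R} (h : ∀ i, M.det ∣ (M.updateRow i x).det) :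
    x ∈ Submodule.span R (Set.range M.row) := by
  choose a ha using h
  have hsum : M.det • ∑ i, a i • M.row i = M.det • x := by
    simp only [← sum_det_updateRow_smul_row M x, ha, mul_smul, Finset.smul_sum]
  have hcancel : IsSMulRegular (n → R) M.det := .pi fun _ ↦ hM.isSMulRegular
  exact (Submodule.mem_span_range_iff_exists_fun R).mpr ⟨a, hcancel hsum⟩

theorem int_combination_of_det_eq_d_general {M : Matrix n n R} {w x : n → R} {d : R}
    (hw : Ideal.span (Set.range w) = ⊤) (hM : ∀ i, d ∣ (M *ᵥ w) i)
    (hreg : IsLeftRegular M.det) (hdet : M.det ∣ d) (hx : d ∣ x ⬝ᵥ w) :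
    x ∈ Submodule.span R (Set.range M.row) := by
  refine mem_span_range_row_of_det_dvd_det_updateRow hreg fun i ↦ hdet.trans ?_
  have hupdate : ∀ j, d ∣ (M.updateRow i x *ᵥ w) j :=
    (Function.forall_update_iff M fun _ r ↦ d ∣ r ⬝ᵥ w).mpr ⟨hx, fun j _ ↦ hM j⟩
  exact dvd_det_of_forall_dvd_mulVec hw hupdate

end

lemma span_range_vec3_eq_top_of_isCoprime {R : Type*} [CommSemiring R] {a b : R}
    (h : IsCoprime a b) (c : R) : Ideal.span (Set.range ![a, b, c]) = ⊤ := by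
  obtain ⟨s, t, hst⟩ := h
  refine (Ideal.eq_top_iff_one _).mpr (Ideal.mem_span_range_iff_exists_fun.mpr ⟨![s, t, 0], ?_⟩)
  simpa [Fin.sum_univ_three] using hst

/-- If `v1, v2, v3` are nonnegative lattice points on the plane `w0*x + w1*y + w2*z = d`
(with `w0, w1, w2` pairwise coprime positive integers) whose determinant has absolute value `d`,
then every nonnegative lattice point on this plane is an integer combination of `v1, v2, v3`. -/
theorem int_combination_of_det_eq_d (w0 w1 w2 d : ℕ) (hw0 : 0 < w0) (hw1 : 0 < w1)
    (hw2 : 0 < w2) (hd : 0 < d)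
    (h01 : Nat.Coprime w0 w1) (h02 : Nat.Coprime w0 w2) (h12 : Nat.Coprime w1 w2)
    (v1 v2 v3 : Fin 3 → ℤ)
    (hnn1 : ∀ j, 0 ≤ v1 j) (hnn2 : ∀ j, 0 ≤ v2 j) (hnn3 : ∀ j, 0 ≤ v3 j)
    (hv1 : (w0 : ℤ) * v1 0 + (w1 : ℤ) * v1 1 + (w2 : ℤ) * v1 2 = (d : ℤ))
    (hv2 : (w0 : ℤ) * v2 0 + (w1 : ℤ) * v2 1 + (w2 : ℤ) * v2 2 = (d : ℤ))
    (hv3 : (w0 : ℤ) * v3 0 + (w1 : ℤ) * v3 1 + (w2 : ℤ) * v3 2 = (d : ℤ))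
    (hdet : |(Matrix.of ![v1, v2, v3]).det| = (d : ℤ))
    (v : Fin 3 → ℤ) (hnn : ∀ j, 0 ≤ v j)
    (hv : (w0 : ℤ) * v 0 + (w1 : ℤ) * v 1 + (w2 : ℤ) * v 2 = (d : ℤ)) :
    ∃ a1 a2 a3 : ℤ, ∀ j, v j = a1 * v1 j + a2 * v2 j + a3 * v3 j := by
  let w : Fin 3 → ℤ := ![w0, w1, w2]
  have hw : Ideal.span (Set.range w) = ⊤ :=
    span_range_vec3_eq_top_of_isCoprime h01.isCoprime _
  have hplane (x : Fin 3 → ℤ) (hx : (w0 : ℤ) * x 0 + w1 * x 1 + w2 * x 2 = d) :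
      (d : ℤ) ∣ dotProduct x w := by
    simp [w, dotProduct, Fin.sum_univ_three, mul_comm, ← hx]
  have hrows : ∀ i, (d : ℤ) ∣ (Matrix.of ![v1, v2, v3]).mulVec w i :=
    Fin.forall_fin_succ.mpr ⟨hplane v1 hv1, Fin.forall_fin_two.mpr ⟨hplane v2 hv2, hplane v3 hv3⟩⟩
  have hreg : IsLeftRegular (Matrix.of ![v1, v2, v3]).det :=
    (IsRegular.of_ne_zero (abs_pos.mp (by lia))).left
  have hmem := int_combination_of_det_eq_d_general hw hrows hreg
    ((abs_dvd _ _).mp hdet.dvd) (hplane v hv)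
  obtain ⟨a, rfl⟩ := (Submodule.mem_span_range_iff_exists_fun ℤ).mp hmem
  exact ⟨a 0, a 1, a 2, fun j ↦ by simp [Fin.sum_univ_three]⟩
end

section
/- Let w₀, w₁, w₂, d be positive integers with w₀, w₁, w₂ pairwise coprime. Let v₁, v₂, v₃ ∈ ℤ³₍≥0₎ be lattice points each satisfying w₀·x + w₁·y + w₂·z = d, and suppose |det(v₁, v₂, v₃)| = d. Let k ≥ 1 be an integer and let (a,b,c) ∈ ℤ³₍≥0₎ satisfy a·w₀ + b·w₁ + c·w₂ = k·d. Then (a,b,c) = α₁v₁ + α₂v₂ + α₃v₃ for unique α₁, α₂, α₃ ∈ ℤ, and moreover α₁ + α₂ + α₃ = k. -/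
/-!
Let `A` be the matrix with rows `v₁, v₂, v₃`, and let `B` be `A` with one row replaced by the target
vector `v`. Then `d` divides every entry of `B *ᵥ w`. Multiplying by the adjugate of `B`, we see
that `d` divides every entry of `det B • w`, hence `det B` itself, because the weights generate the
unit ideal. As `det A` divides `d`, the solution given by Cramer's rule is integral. Pairing the
combination with the weights and cancelling `d` computes the sum of its coefficients.
-/

open Matrix nonZeroDivisors

section UnimodularVector

variable {ι R : Type*} [CommSemiring R] {w : ι → R}

lemma span_range_eq_top_of_isCoprime {i j : ι} (h : IsCoprime (w i) (w j)) :
    Ideal.span (Set.range w) = ⊤ := by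
  obtain ⟨s, t, hst⟩ := h
  have mem (l : ι) : w l ∈ Ideal.span (Set.range w) := Ideal.subset_span ⟨l, rfl⟩
  exact (Ideal.eq_top_iff_one _).2
    (hst ▸ add_mem (Ideal.mul_mem_left _ s (mem i)) (Ideal.mul_mem_left _ t (mem j)))

lemma dvd_of_forall_dvd_mul_of_span_range_eq_top (hw : Ideal.span (Set.range w) = ⊤) {d x : R}
    (h : ∀ i, d ∣ x * w i) : d ∣ x := by
  have hle : Ideal.span (Set.range w) ≤ Submodule.comap (LinearMap.mulLeft R x) (Ideal.span {d}) :=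
    Ideal.span_le.2 (Set.range_subset_iff.2 fun i ↦ Ideal.mem_span_singleton.2 (h i))
  have hone : (1 : R) ∈ Ideal.span (Set.range w) := hw ▸ Submodule.mem_top
  simpa [Ideal.mem_span_singleton] using hle hone

end UnimodularVector

lemma sum_mul_eq_dotProduct_vecMul {ι κ R : Type*} [Fintype ι] [Fintype κ] [CommSemiring R]
    {A : Matrix ι κ R} {w : κ → R} {d : R} (hA : ∀ i, w ⬝ᵥ A i = d) (a : ι → R) :
    (∑ i, a i) * d = w ⬝ᵥ (a ᵥ* A) := by
  have hAw : A *ᵥ w = fun _ ↦ d := funext fun i ↦ (dotProduct_comm _ _).trans (hA i)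
  rw [dotProduct_comm, ← dotProduct_mulVec, hAw, dotProduct, Finset.sum_mul]

section SquareMatrix

variable {ι R : Type*} [Fintype ι] [DecidableEq ι] [CommRing R]

lemma dvd_det_mul_of_forall_dvd_dotProduct {B : Matrix ι ι R} {w : ι → R} {d : R}
    (h : ∀ i, d ∣ w ⬝ᵥ B i) (j : ι) : d ∣ B.det * w j := by
  have hadj : B.adjugate *ᵥ (B *ᵥ w) = B.det • w := by
    rw [mulVec_mulVec, adjugate_mul, smul_mulVec, one_mulVec]
  rw [← smul_eq_mul, ← Pi.smul_apply, ← hadj]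
  exact Finset.dvd_sum fun i _ ↦ (dotProduct_comm w (B i) ▸ h i).mul_left _

lemma dvd_cramer_transpose_of_dvd_dotProduct {A : Matrix ι ι R} {w v : ι → R} {d : R}
    (hw : Ideal.span (Set.range w) = ⊤) (hA : ∀ i, d ∣ w ⬝ᵥ A i) (hv : d ∣ w ⬝ᵥ v) (i : ι) :
    d ∣ cramer Aᵀ v i := by
  rw [cramer_transpose_apply]
  refine dvd_of_forall_dvd_mul_of_span_range_eq_top hw
    (dvd_det_mul_of_forall_dvd_dotProduct fun j ↦ ?_)
  obtain rfl | hji := eq_or_ne j i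
  · rwa [updateRow_self]
  · rw [updateRow_ne hji]
    exact hA j

lemma exists_vecMul_eq_of_forall_det_dvd_cramer {A : Matrix ι ι R} {v : ι → R} (hA : A.det ∈ R⁰)
    (h : ∀ i, A.det ∣ cramer Aᵀ v i) : ∃ a, a ᵥ* A = v := by
  choose a ha using h
  refine ⟨a, funext fun j ↦ (mul_cancel_left_mem_nonZeroDivisors hA).1 ?_⟩
  have hcramer : cramer Aᵀ v ᵥ* A = A.det • v := by
    rw [← mulVec_transpose, mulVec_cramer, det_transpose]
  rw [show cramer Aᵀ v = A.det • a from funext ha, smul_vecMul] at hcramer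
  exact congrFun hcramer j

lemma vecMul_injective_of_det_mem_nonZeroDivisors {A : Matrix ι ι R} (hA : A.det ∈ R⁰) :
    Function.Injective (· ᵥ* A) := by
  simp only [← mulVec_transpose]
  exact mulVec_injective_of_det_mem_nonZeroDivisors (by rwa [det_transpose])

theorem unique_int_combination_sum_eq_k_general {A : Matrix ι ι R} {w v : ι → R} {d k : R}
    (hw : Ideal.span (Set.range w) = ⊤) (hd : d ∈ R⁰) (hA : ∀ i, w ⬝ᵥ A i = d)
    (hdet : A.det ∣ d) (hv : w ⬝ᵥ v = k * d) :
    (∃! a, a ᵥ* A = v) ∧ ∀ a, a ᵥ* A = v → ∑ i, a i = k := by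
  have hA₀ : A.det ∈ R⁰ := by
    obtain ⟨c, rfl⟩ := hdet
    exact (mul_mem_nonZeroDivisors.1 hd).1
  obtain ⟨a, ha⟩ : ∃ a, a ᵥ* A = v := exists_vecMul_eq_of_forall_det_dvd_cramer hA₀ fun i ↦
    hdet.trans <| dvd_cramer_transpose_of_dvd_dotProduct hw (fun j ↦ (hA j).symm.dvd)
      (hv ▸ dvd_mul_left d k) i
  refine ⟨⟨a, ha, fun b hb ↦ vecMul_injective_of_det_mem_nonZeroDivisors hA₀ (hb.trans ha.symm)⟩,
    fun b hb ↦ (mul_cancel_right_mem_nonZeroDivisors hd).1 ?_⟩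
  rw [sum_mul_eq_dotProduct_vecMul hA, hb, hv]

end SquareMatrix

lemma bijective_vec3 (α : Type*) :
    Function.Bijective fun a : α × α × α ↦ ![a.1, a.2.1, a.2.2] := by
  refine ⟨fun a b hab ↦ by simpa [Prod.ext_iff] using hab, fun f ↦ ⟨(f 0, f 1, f 2), ?_⟩⟩
  ext i
  fin_cases i <;> rfl

lemma vec3_vecMul_of_eq_iff {κ R : Type*} [NonUnitalNonAssocSemiring R] {v₁ v₂ v₃ v : κ → R}
    {a₁ a₂ a₃ : R} : ![a₁, a₂, a₃] ᵥ* of ![v₁, v₂, v₃] = v ↔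
      ∀ j, v j = a₁ * v₁ j + a₂ * v₂ j + a₃ * v₃ j := by
  simp [funext_iff, eq_comm, add_assoc]

/-- If `v1, v2, v3` are nonnegative lattice points on the plane `w0*x + w1*y + w2*z = d`
(with `w0, w1, w2` pairwise coprime positive integers) whose determinant has absolute value `d`,
and `(a, b, c)` is a nonnegative lattice point with `a*w0 + b*w1 + c*w2 = k*d` for some `k ≥ 1`,
then `(a, b, c)` is an integer combination of `v1, v2, v3` with unique coefficients, and the
coefficients sum to `k`. -/
theorem unique_int_combination_sum_eq_k (w0 w1 w2 d : ℕ) (hw0 : 0 < w0) (hw1 : 0 < w1)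
    (hw2 : 0 < w2) (hd : 0 < d)
    (h01 : Nat.Coprime w0 w1) (h02 : Nat.Coprime w0 w2) (h12 : Nat.Coprime w1 w2)
    (v1 v2 v3 : Fin 3 → ℤ)
    (hnn1 : ∀ j, 0 ≤ v1 j) (hnn2 : ∀ j, 0 ≤ v2 j) (hnn3 : ∀ j, 0 ≤ v3 j)
    (hv1 : (w0 : ℤ) * v1 0 + (w1 : ℤ) * v1 1 + (w2 : ℤ) * v1 2 = (d : ℤ))
    (hv2 : (w0 : ℤ) * v2 0 + (w1 : ℤ) * v2 1 + (w2 : ℤ) * v2 2 = (d : ℤ))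
    (hv3 : (w0 : ℤ) * v3 0 + (w1 : ℤ) * v3 1 + (w2 : ℤ) * v3 2 = (d : ℤ))
    (hdet : |(Matrix.of ![v1, v2, v3]).det| = (d : ℤ))
    (k : ℕ) (hk : 1 ≤ k)
    (v : Fin 3 → ℤ) (hnn : ∀ j, 0 ≤ v j)
    (hv : (w0 : ℤ) * v 0 + (w1 : ℤ) * v 1 + (w2 : ℤ) * v 2 = (k : ℤ) * (d : ℤ)) :
    (∃! a : ℤ × ℤ × ℤ, ∀ j, v j = a.1 * v1 j + a.2.1 * v2 j + a.2.2 * v3 j) ∧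
      (∀ a : ℤ × ℤ × ℤ, (∀ j, v j = a.1 * v1 j + a.2.1 * v2 j + a.2.2 * v3 j) →
        a.1 + a.2.1 + a.2.2 = (k : ℤ)) := by
  have hw : Ideal.span (Set.range ![(w0 : ℤ), w1, w2]) = ⊤ :=
    span_range_eq_top_of_isCoprime (i := 0) (j := 1) (Nat.isCoprime_iff_coprime.2 h01)
  have hrow (i) : ![(w0 : ℤ), w1, w2] ⬝ᵥ of ![v1, v2, v3] i = d := by
    rw [vec3_dotProduct]
    fin_cases i
    exacts [hv1, hv2, hv3]
  have hdvd : (of ![v1, v2, v3]).det ∣ (d : ℤ) := hdet ▸ (dvd_abs _ _).2 dvd_rfl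
  have hd₀ : (d : ℤ) ∈ ℤ⁰ := mem_nonZeroDivisors_of_ne_zero (Nat.cast_ne_zero.2 hd.ne')
  obtain ⟨hex, hsum⟩ :=
    unique_int_combination_sum_eq_k_general hw hd₀ hrow hdvd ((vec3_dotProduct _ v).trans hv)
  simp only [← vec3_vecMul_of_eq_iff]
  exact ⟨(bijective_vec3 ℤ).existsUnique_iff.1 hex,
    fun a ha ↦ (Fin.sum_univ_three _).symm.trans (hsum _ ha)⟩
end
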